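/- Let m ≥ 2, q = m(m+3)/2 − 1, and let F_π : ℝ^m → ℝ^q be the composition of the canonical free map F(x^1,…,x^m) = (x^1,…,x^m, all quadratic monomials x^α x^β with α ≤ β) with the projection forgetting the coordinate corresponding to the monomial x^1 x^2. Then the linearization of the pullback-metric operator at F_π is surjective: for every family of smooth functions δg_{αβ} = δg_{βα} : ℝ^m → ℝ (1 ≤ α, β ≤ m) there exists a smooth map δf : ℝ^m → ℝ^q such that ⟨∂_α F_π, ∂_β δf⟩ + ⟨∂_β F_π, ∂_α δf⟩ = δg_{αβ} on ℝ^m for all α, β. -/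

import Mathlib

/-- The partial derivative of a map `f : ℝ^m → E` with respect to the `α`-th coordinate,
taken pointwise. -/
noncomputable def pd {m : ℕ} {E : Type*} [NormedAddCommGroup E] [NormedSpace ℝ E]
    (α : Fin m) (f : EuclideanSpace ℝ (Fin m) → E) :
    EuclideanSpace ℝ (Fin m) → E :=
  fun x => fderiv ℝ f x (EuclideanSpace.single α 1)

open MeasureTheory Topology in
theorem aux_hasFDerivAt_param {E G : Type} [NormedAddCommGroup E] [NormedSpace ℝ E]
    [FiniteDimensional ℝ E] [NormedAddCommGroup G] [NormedSpace ℝ G]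
    (K : E × ℝ → G) (hK : ContDiff ℝ (⊤ : ℕ∞) K) (x₀ : E) :
    HasFDerivAt (fun x => ∫ s in (0:ℝ)..1, K (x, s))
      (∫ s in (0:ℝ)..1, (fderiv ℝ K (x₀, s)).comp (ContinuousLinearMap.inl ℝ E ℝ)) x₀ := by
  have hd : Differentiable ℝ K := hK.differentiable (by simp)
  have hc : Continuous (fun p : E × ℝ => (fderiv ℝ K p).comp (ContinuousLinearMap.inl ℝ E ℝ)) :=
    (hK.continuous_fderiv (by simp)).clm_comp continuous_const
  have hcpt : IsCompact (Metric.closedBall x₀ 1 ×ˢ Set.Icc (0:ℝ) 1) := by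
    have : ProperSpace E := FiniteDimensional.proper ℝ E
    exact (isCompact_closedBall x₀ 1).prod isCompact_Icc
  obtain ⟨C, hC⟩ := hcpt.exists_bound_of_continuousOn hc.continuousOn
  refine intervalIntegral.hasFDerivAt_integral_of_dominated_of_fderiv_le
    (F := fun x s => K (x, s))
    (F' := fun x s => (fderiv ℝ K (x, s)).comp (ContinuousLinearMap.inl ℝ E ℝ))
    (bound := fun _ => C)
    (Metric.closedBall_mem_nhds x₀ one_pos) ?_ ?_ ?_ ?_ ?_ ?_
  · refine Filter.Eventually.of_forall fun x => ?_
    exact (hd.continuous.comp (by fun_prop : Continuous fun s : ℝ => (x, s))).aestronglyMeasurable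
  · exact (hd.continuous.comp (by fun_prop : Continuous fun s : ℝ => (x₀, s))).intervalIntegrable _ _
  · exact (hc.comp (by fun_prop : Continuous fun s : ℝ => (x₀, s))).aestronglyMeasurable
  · refine Filter.Eventually.of_forall fun s hs x hx => ?_
    rw [Set.uIoc_of_le zero_le_one] at hs
    exact hC (x, s) ⟨hx, hs.1.le, hs.2⟩
  · exact intervalIntegrable_const
  · refine Filter.Eventually.of_forall fun s hs x hx => ?_
    exact (hd (x, s)).hasFDerivAt.comp x (hasFDerivAt_prodMk_left x s)

theorem aux_contDiff_param_nat {E : Type} [NormedAddCommGroup E] [NormedSpace ℝ E]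
    [FiniteDimensional ℝ E] (n : ℕ) : ∀ {G : Type} [NormedAddCommGroup G] [NormedSpace ℝ G]
    (K : E × ℝ → G) (_ : ContDiff ℝ (⊤ : ℕ∞) K),
    ContDiff ℝ n (fun x => ∫ s in (0:ℝ)..1, K (x, s)) := by
  induction n with
  | zero =>
    intro G _ _ K hK
    have : Differentiable ℝ (fun x => ∫ s in (0:ℝ)..1, K (x, s)) :=
      fun x => (aux_hasFDerivAt_param K hK x).differentiableAt
    exact contDiff_zero.2 this.continuous
  | succ n ih =>
    intro G _ _ K hK
    have h1 : ContDiff ℝ (⊤ : ℕ∞)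
        (fun p : E × ℝ => (fderiv ℝ K p).comp (ContinuousLinearMap.inl ℝ E ℝ)) :=
      (hK.fderiv_right (by simp)).clm_comp contDiff_const
    have h2 := ih _ h1
    have : ((n + 1 : ℕ) : WithTop ℕ∞) = (n : WithTop ℕ∞) + 1 := by push_cast; rfl
    rw [this]
    exact contDiff_succ_iff_hasFDerivAt.2 ⟨_, h2, fun x => aux_hasFDerivAt_param K hK x⟩

theorem aux_contDiff_param {E : Type} [NormedAddCommGroup E] [NormedSpace ℝ E]
    [FiniteDimensional ℝ E] {G : Type} [NormedAddCommGroup G] [NormedSpace ℝ G]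
    (K : E × ℝ → G) (hK : ContDiff ℝ (⊤ : ℕ∞) K) :
    ContDiff ℝ (⊤ : ℕ∞) (fun x => ∫ s in (0:ℝ)..1, K (x, s)) :=
  contDiff_infty.2 fun n => aux_contDiff_param_nat n K hK

/-- Smooth antiderivative in a coordinate direction. -/
theorem aux_antideriv {m : ℕ} (i : Fin m) (g : EuclideanSpace ℝ (Fin m) → ℝ)
    (hg : ContDiff ℝ (⊤ : ℕ∞) g) :
    ∃ u : EuclideanSpace ℝ (Fin m) → ℝ, ContDiff ℝ (⊤ : ℕ∞) u ∧ ∀ x, pd i u x = g x := by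
  set e : EuclideanSpace ℝ (Fin m) := EuclideanSpace.single i 1 with he
  have hei : e i = 1 := by simp [he]
  have hpi : ContDiff ℝ (⊤ : ℕ∞) (fun x : EuclideanSpace ℝ (Fin m) => x i) :=
    (EuclideanSpace.proj (𝕜 := ℝ) i).contDiff
  let K : EuclideanSpace ℝ (Fin m) × ℝ → ℝ := fun p => g (p.1 - p.1 i • e + (p.2 * p.1 i) • e)
  have hK : ContDiff ℝ (⊤ : ℕ∞) K := by
    have h1 : ContDiff ℝ (⊤ : ℕ∞) (fun p : EuclideanSpace ℝ (Fin m) × ℝ => p.1 i) :=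
      hpi.comp contDiff_fst
    exact hg.comp ((contDiff_fst.sub (h1.smul contDiff_const)).add
      ((contDiff_snd.mul h1).smul contDiff_const))
  have hu : ContDiff ℝ (⊤ : ℕ∞)
      (fun x : EuclideanSpace ℝ (Fin m) => x i * ∫ s in (0:ℝ)..1, K (x, s)) :=
    hpi.mul (aux_contDiff_param K hK)
  refine ⟨_, hu, fun x => ?_⟩
  have hL := ((hu.differentiable (by simp)) x).hasFDerivAt.hasLineDerivAt e
  have hL' := hL
  unfold HasLineDerivAt at hL'
  have hfun : (fun t : ℝ => (x + t • e) i * ∫ s in (0:ℝ)..1, K (x + t • e, s))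
      = fun t : ℝ => ∫ r in (0:ℝ)..(x i + t), g (x - x i • e + r • e) := by
    funext t
    have h2 : (x + t • e) i = x i + t := by simp [hei]
    have h3 : ∀ s, K (x + t • e, s) = (fun r => g (x - x i • e + r • e)) (s * (x i + t)) := by
      intro s
      simp only [K, h2]
      congr 1
      module
    simp_rw [h3, h2]
    have := intervalIntegral.smul_integral_comp_mul_right (a := 0) (b := 1)
      (fun r => g (x - x i • e + r • e)) (x i + t)
    simpa using this
  rw [hfun] at hL'
  have hcont : Continuous fun r : ℝ => g (x - x i • e + r • e) :=
    hg.continuous.comp (by fun_prop)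
  have hF : HasDerivAt (fun t : ℝ => ∫ r in (0:ℝ)..(x i + t), g (x - x i • e + r • e))
      (g x) 0 := by
    have h4 := intervalIntegral.integral_hasDerivAt_right
      (hcont.intervalIntegrable 0 (x i + 0)) (hcont.stronglyMeasurableAtFilter _ _)
      (hcont.continuousAt)
    have h5 : HasDerivAt (fun t : ℝ => x i + t) 1 0 := (hasDerivAt_id 0).const_add (x i)
    have := HasDerivAt.comp (0:ℝ) h4 h5
    simpa [Function.comp_def] using this
  exact hL'.unique hF

theorem aux_card (m : ℕ) (hm : 2 ≤ m) : Fintype.card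
        (Fin m ⊕ {p : Fin m × Fin m // p.1 ≤ p.2 ∧ ((p.1 : ℕ), (p.2 : ℕ)) ≠ (0, 1)})
      = m * (m + 3) / 2 - 1 := by
  rw [Fintype.card_sum, Fintype.card_fin, Fintype.card_subtype]
  have h1 : (Finset.univ.filter fun p : Fin m × Fin m =>
      p.1 ≤ p.2 ∧ ((p.1 : ℕ), (p.2 : ℕ)) ≠ (0, 1))
      = (Finset.univ.filter fun p : Fin m × Fin m => p.1 ≤ p.2).erase
        (⟨0, by omega⟩, ⟨1, by omega⟩) := by
    ext ⟨a, b⟩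
    simp [Fin.ext_iff]
    tauto
  have h2 : (Finset.univ.filter fun p : Fin m × Fin m => p.1 ≤ p.2).card = m * (m + 1) / 2 := by
    rw [← Finset.univ_product_univ, Finset.card_filter, Finset.sum_product_right]
    have : ∀ b : Fin m, (∑ a : Fin m, if a ≤ b then 1 else 0) = (b : ℕ) + 1 := by
      intro b
      rw [← Finset.card_filter]
      have : (Finset.univ.filter fun a : Fin m => a ≤ b) = Finset.Iic b := by ext; simp
      rw [this, Fin.card_Iic]
    simp only [this]
    rw [Fin.sum_univ_eq_sum_range (fun b => b + 1) m]
    have := Finset.sum_range_id_mul_two (m + 1)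
    rw [Finset.sum_range_succ'] at this
    simp only [Nat.add_sub_cancel, add_zero] at this
    rw [mul_comm m, ← this, Nat.mul_div_cancel _ (by norm_num)]
  have h3 : ((⟨0, by omega⟩, ⟨1, by omega⟩) : Fin m × Fin m) ∈
      (Finset.univ.filter fun p : Fin m × Fin m => p.1 ≤ p.2) := by
    exact Finset.mem_filter.2 ⟨Finset.mem_univ _, Nat.zero_le 1⟩
  rw [h1, Finset.card_erase_of_mem h3, h2]
  have : m * (m + 3) = m * (m + 1) + 2 * m := by ring
  have h4 : 2 * 3 ≤ m * (m + 1) := Nat.mul_le_mul hm (by omega)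
  omega

theorem aux_pd_apply {m : ℕ} {ι : Type} [Fintype ι]
    (f : EuclideanSpace ℝ (Fin m) → EuclideanSpace ℝ ι) (x : EuclideanSpace ℝ (Fin m))
    (hf : DifferentiableAt ℝ f x) (α : Fin m) (i : ι) :
    pd α f x i = pd α (fun y => f y i) x := by
  have := ((EuclideanSpace.proj (𝕜 := ℝ) i).hasFDerivAt (x := f x)).comp x hf.hasFDerivAt
  have h2 := this.fderiv
  unfold pd
  change _ = fderiv ℝ (EuclideanSpace.proj i ∘ f) x _
  rw [h2]
  simp

theorem aux_pd_coord {m : ℕ} (α i : Fin m) (x : EuclideanSpace ℝ (Fin m)) :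
    pd α (fun y : EuclideanSpace ℝ (Fin m) => y i) x = if i = α then 1 else 0 := by
  have h := (EuclideanSpace.proj (𝕜 := ℝ) i).hasFDerivAt (x := x)
  unfold pd
  change fderiv ℝ (EuclideanSpace.proj i) x _ = _
  rw [h.fderiv]
  simp

/-- The index type of the quadratic coordinates. -/
abbrev QI (m : ℕ) := {p : Fin m × Fin m // p.1 ≤ p.2 ∧ ((p.1 : ℕ), (p.2 : ℕ)) ≠ (0, 1)}

/-- First derivatives of the map. -/
noncomputable def dF {m : ℕ} (α : Fin m) (x : EuclideanSpace ℝ (Fin m)) :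
    EuclideanSpace ℝ (Fin m ⊕ QI m) :=
  WithLp.toLp 2 (Sum.elim (fun i => if i = α then 1 else 0)
    (fun p => (if p.1.1 = α then x p.1.2 else 0) + (if p.1.2 = α then x p.1.1 else 0)))

/-- Second derivatives of the map. -/
noncomputable def ddF {m : ℕ} (α β : Fin m) : EuclideanSpace ℝ (Fin m ⊕ QI m) :=
  WithLp.toLp 2 (Sum.elim (fun _ => 0)
    (fun p => (if p.1.1 = α ∧ p.1.2 = β then 1 else 0)
      + (if p.1.2 = α ∧ p.1.1 = β then 1 else 0)))

theorem aux_coord_smooth {m : ℕ} (i : Fin m) :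
    ContDiff ℝ (⊤ : ℕ∞) (fun x : EuclideanSpace ℝ (Fin m) => x i) :=
  (EuclideanSpace.proj (𝕜 := ℝ) i).contDiff

theorem aux_dF_smooth {m : ℕ} (α : Fin m) : ContDiff ℝ (⊤ : ℕ∞) (dF α) := by
  rw [contDiff_euclidean]
  rintro (i | p)
  · simp only [dF, Sum.elim_inl]
    exact contDiff_const
  · simp only [dF, Sum.elim_inr]
    refine ContDiff.add ?_ ?_
    · split_ifs
      · exact aux_coord_smooth _
      · exact contDiff_const
    · split_ifs
      · exact aux_coord_smooth _
      · exact contDiff_const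

theorem aux_pd_dF {m : ℕ} (α β : Fin m) (x : EuclideanSpace ℝ (Fin m)) :
    pd β (dF α) x = ddF α β := by
  ext i
  rw [aux_pd_apply _ _ ((aux_dF_smooth α).differentiable (by simp) x)]
  rcases i with i | p
  · simp [dF, ddF, pd]
  · simp only [dF, ddF, Sum.elim_inr]
    have hd : ∀ (c : Prop) [Decidable c] (i : Fin m), DifferentiableAt ℝ
        (fun y : EuclideanSpace ℝ (Fin m) => if c then y i else 0) x := by
      intro c _ i
      split_ifs
      · exact (aux_coord_smooth i).differentiable (by simp) x
      · exact differentiableAt_const _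
    have hp : ∀ (c : Prop) [Decidable c] (i : Fin m),
        pd β (fun y : EuclideanSpace ℝ (Fin m) => if c then y i else 0) x
          = if c ∧ i = β then 1 else 0 := by
      intro c _ i
      by_cases hc : c
      · simp only [hc, if_true, true_and]
        exact aux_pd_coord β i x
      · simp [hc, pd]
    rw [← hp, ← hp]
    unfold pd
    rw [fderiv_fun_add (hd _ _) (hd _ _)]
    rfl

theorem aux_inner {m : ℕ} (a b : EuclideanSpace ℝ (Fin m ⊕ QI m)) :
    (inner ℝ a b : ℝ) = ∑ i : Fin m, a (Sum.inl i) * b (Sum.inl i)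
      + ∑ p : QI m, a (Sum.inr p) * b (Sum.inr p) := by
  rw [PiLp.inner_apply, Fintype.sum_sum_type]
  simp [mul_comm]

theorem aux_inner_ddF {m : ℕ} (α β : Fin m) (hab : α ≤ β) (h : QI m → ℝ)
    (b : EuclideanSpace ℝ (Fin m ⊕ QI m)) (hb : ∀ p, b (Sum.inr p) = h p) :
    (inner ℝ (ddF α β) b : ℝ) = if hq : ((α : ℕ), (β : ℕ)) ≠ (0, 1) then
      (if α = β then 2 else 1) * h ⟨(α, β), hab, hq⟩ else 0 := by
  rw [aux_inner]
  simp only [ddF, Sum.elim_inl, Sum.elim_inr, zero_mul, Finset.sum_const_zero, zero_add, hb]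
  split_ifs with hq hαβ
  · rw [Finset.sum_eq_single ⟨(α, β), hab, hq⟩]
    · subst hαβ
      norm_num
    · rintro ⟨⟨a, c⟩, h1, h2⟩ _ hne
      have : ¬ (a = α ∧ c = β) := fun h => hne (by simp [h.1, h.2])
      subst hαβ
      simp only [this, if_false, and_comm (a := c = α), add_zero, zero_mul]
    · simp
  · rw [Finset.sum_eq_single ⟨(α, β), hab, hq⟩]
    · have : ¬ (β = α) := fun h => hαβ h.symm
      simp [this]
    · rintro ⟨⟨a, c⟩, h1, h2⟩ _ hne
      have h3 : ¬ (a = α ∧ c = β) := fun h => hne (by simp [h.1, h.2])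
      have h4 : ¬ (c = α ∧ a = β) := by
        rintro ⟨rfl, rfl⟩
        exact hαβ (le_antisymm hab h1)
      simp only [h3, h4, if_false, add_zero, zero_mul]
    · simp
  · push Not at hq
    refine Finset.sum_eq_zero ?_
    rintro ⟨⟨a, c⟩, h1, h2⟩ _
    have h3 : ¬ (a = α ∧ c = β) := by
      rintro ⟨rfl, rfl⟩
      exact h2 hq
    have h4 : ¬ (c = α ∧ a = β) := by
      rintro ⟨rfl, rfl⟩
      simp only [Prod.mk.injEq] at hq
      simp only [Fin.le_def] at h1
      omega
    simp only [h3, h4, if_false, add_zero, zero_mul]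

theorem aux_pd_smooth {m : ℕ} (α : Fin m) (f : EuclideanSpace ℝ (Fin m) → ℝ)
    (hf : ContDiff ℝ (⊤ : ℕ∞) f) : ContDiff ℝ (⊤ : ℕ∞) (pd α f) :=
  (hf.fderiv_right (by simp)).clm_apply contDiff_const

theorem aux_pd_F {m : ℕ} (α : Fin m) (x : EuclideanSpace ℝ (Fin m)) :
    pd α (fun x : EuclideanSpace ℝ (Fin m) => (WithLp.toLp 2
        (Sum.elim (fun α : Fin m => x α)
          (fun p : QI m => x p.1.1 * x p.1.2)) : EuclideanSpace ℝ (Fin m ⊕ QI m))) x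
      = dF α x := by
  have hs : ContDiff ℝ (⊤ : ℕ∞) (fun x : EuclideanSpace ℝ (Fin m) => (WithLp.toLp 2
        (Sum.elim (fun α : Fin m => x α)
          (fun p : QI m => x p.1.1 * x p.1.2)) : EuclideanSpace ℝ (Fin m ⊕ QI m))) := by
    rw [contDiff_euclidean]
    rintro (i | p)
    · exact aux_coord_smooth i
    · exact (aux_coord_smooth _).mul (aux_coord_smooth _)
  ext i
  rw [aux_pd_apply _ _ (hs.differentiable (by simp) x)]
  rcases i with i | p
  · simp only [dF, Sum.elim_inl]
    exact aux_pd_coord α i x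
  · simp only [dF, Sum.elim_inr]
    have h1 := aux_pd_coord α p.1.1 x
    have h2 := aux_pd_coord α p.1.2 x
    unfold pd at h1 h2 ⊢
    rw [fderiv_fun_mul ((aux_coord_smooth _).differentiable (by simp) x)
      ((aux_coord_smooth _).differentiable (by simp) x)]
    simp only [add_apply, smul_apply,
      h1, h2, smul_eq_mul, mul_ite, mul_one, mul_zero]
    ring

theorem aux_main (m : ℕ) (hm : 2 ≤ m)
    (δg : Fin m → Fin m → EuclideanSpace ℝ (Fin m) → ℝ)
    (hδg : ∀ α β, ContDiff ℝ (⊤ : ℕ∞) (δg α β))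
    (hδgsym : ∀ α β, δg α β = δg β α) :
    ∃ δf : EuclideanSpace ℝ (Fin m) → EuclideanSpace ℝ (Fin m ⊕ QI m),
        ContDiff ℝ (⊤ : ℕ∞) δf
        ∧ ∀ α β : Fin m, ∀ x : EuclideanSpace ℝ (Fin m),
            (inner ℝ (dF α x) (pd β δf x) : ℝ) + (inner ℝ (dF β x) (pd α δf x) : ℝ)
              = δg α β x := by
  let i0 : Fin m := ⟨0, by omega⟩
  let i1 : Fin m := ⟨1, by omega⟩
  obtain ⟨v, hv, hv'⟩ := aux_antideriv i0 (δg i0 i1) (hδg i0 i1)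
  let u : Fin m → EuclideanSpace ℝ (Fin m) → ℝ := fun α => if α = i1 then v else fun _ => 0
  have hu : ∀ α, ContDiff ℝ (⊤ : ℕ∞) (u α) := by
    intro α
    simp only [u]
    split_ifs
    · exact hv
    · exact contDiff_const
  let h : QI m → EuclideanSpace ℝ (Fin m) → ℝ := fun p x =>
    (pd p.1.2 (u p.1.1) x + pd p.1.1 (u p.1.2) x - δg p.1.1 p.1.2 x)
      * (if p.1.1 = p.1.2 then (4 : ℝ)⁻¹ else 2⁻¹)
  have hh : ∀ p, ContDiff ℝ (⊤ : ℕ∞) (h p) := fun p =>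
    (((aux_pd_smooth _ _ (hu _)).add (aux_pd_smooth _ _ (hu _))).sub (hδg _ _)).mul contDiff_const
  let δf : EuclideanSpace ℝ (Fin m) → EuclideanSpace ℝ (Fin m ⊕ QI m) := fun x =>
    WithLp.toLp 2 (Sum.elim (fun α => u α x - ∑ p : QI m, dF α x (Sum.inr p) * h p x)
      (fun p => h p x))
  have hδf : ContDiff ℝ (⊤ : ℕ∞) δf := by
    rw [contDiff_euclidean]
    rintro (i | p)
    · refine (hu i).sub (ContDiff.sum fun p _ => ContDiff.mul ?_ (hh p))
      exact contDiff_euclidean.1 (aux_dF_smooth i) _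
    · exact hh p
  have hudef : ∀ α, u α = fun x => (inner ℝ (dF α x) (δf x) : ℝ) := by
    intro α
    funext x
    rw [aux_inner]
    have : ∀ i, dF α x (Sum.inl i) = if i = α then 1 else 0 := fun i => rfl
    simp only [this, ite_mul, one_mul, zero_mul, Finset.sum_ite_eq', Finset.mem_univ, if_true]
    simp [δf]
  have hpu : ∀ α β x, pd β (u α) x
      = (inner ℝ (dF α x) (pd β δf x) : ℝ) + inner ℝ (ddF α β) (δf x) := by
    intro α β x
    rw [hudef α, ← aux_pd_dF α β x]
    exact fderiv_inner_apply ℝ ((aux_dF_smooth α).differentiable (by simp) x)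
      (hδf.differentiable (by simp) x) _
  have hsymm : ∀ α β : Fin m, (ddF α β) = ddF β α := by
    intro α β
    simp only [ddF]
    congr 2
    funext p
    rw [add_comm]
    simp only [and_comm]
  refine ⟨δf, hδf, ?_⟩
  have key : ∀ α β : Fin m, α ≤ β → ∀ x : EuclideanSpace ℝ (Fin m),
            (inner ℝ (dF α x) (pd β δf x) : ℝ) + (inner ℝ (dF β x) (pd α δf x) : ℝ)
              = δg α β x := by
    intro α β hab x
    have e1 := hpu α β x
    have e2 := hpu β α x
    rw [hsymm β α] at e2
    rw [aux_inner_ddF α β hab (fun p => h p x) (δf x) (fun p => rfl)] at e1 e2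
    by_cases hq : ((α : ℕ), (β : ℕ)) ≠ (0, 1)
    · rw [dif_pos hq] at e1 e2
      simp only [h] at e1 e2
      split_ifs at e1 e2 <;> linarith
    · rw [dif_neg hq] at e1 e2
      push Not at hq
      simp only [Prod.mk.injEq] at hq
      have ha : α = i0 := Fin.ext hq.1
      have hb : β = i1 := Fin.ext hq.2
      have hu0 : u α = fun _ => 0 := by
        simp [u, ha, i0, i1]
      have hu1 : u β = v := by simp [u, hb]
      have e3 : pd β (u α) x = 0 := by simp [hu0, pd]
      have e4 : pd α (u β) x = δg α β x := by rw [hu1, ha, hb, hv']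
      linarith
  intro α β x
  rcases le_total α β with hab | hab
  · exact key α β hab x
  · rw [hδgsym, add_comm]
    exact key β α hab x

/-- For `m ≥ 2`, let `F_π : ℝ^m → ℝ^{m(m+3)/2 − 1}` be the canonical free map with the
coordinate of the monomial `x^1 x^2` forgotten (coordinates indexed by
`Fin m ⊕ {(α,β) | α ≤ β, (α,β) ≠ (1,2)}`, of cardinality `m(m+3)/2 − 1`). Then the
linearization of the pullback-metric operator at `F_π` is surjective: for every symmetric
family of smooth functions `δg_{αβ}` there is a smooth `δf` with
`⟨∂_α F_π, ∂_β δf⟩ + ⟨∂_β F_π, ∂_α δf⟩ = δg_{αβ}` for all `α, β`. -/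
theorem linearization_surjective_at_projected_canonical_map (m : ℕ) (hm : 2 ≤ m)
    (Fπ : EuclideanSpace ℝ (Fin m) →
        EuclideanSpace ℝ
          (Fin m ⊕ {p : Fin m × Fin m // p.1 ≤ p.2 ∧ ((p.1 : ℕ), (p.2 : ℕ)) ≠ (0, 1)}))
    (hFπ : Fπ = fun x => (WithLp.equiv 2 _).symm
        (Sum.elim (fun α : Fin m => x α)
          (fun p : {p : Fin m × Fin m // p.1 ≤ p.2 ∧ ((p.1 : ℕ), (p.2 : ℕ)) ≠ (0, 1)} =>
            x p.1.1 * x p.1.2)))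
    (δg : Fin m → Fin m → EuclideanSpace ℝ (Fin m) → ℝ)
    (hδg : ∀ α β, ContDiff ℝ (⊤ : ℕ∞) (δg α β))
    (hδgsym : ∀ α β, δg α β = δg β α) :
    Fintype.card
        (Fin m ⊕ {p : Fin m × Fin m // p.1 ≤ p.2 ∧ ((p.1 : ℕ), (p.2 : ℕ)) ≠ (0, 1)})
      = m * (m + 3) / 2 - 1
    ∧ ∃ δf : EuclideanSpace ℝ (Fin m) →
          EuclideanSpace ℝ
            (Fin m ⊕ {p : Fin m × Fin m // p.1 ≤ p.2 ∧ ((p.1 : ℕ), (p.2 : ℕ)) ≠ (0, 1)}),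
        ContDiff ℝ (⊤ : ℕ∞) δf
        ∧ ∀ α β : Fin m, ∀ x : EuclideanSpace ℝ (Fin m),
            (inner ℝ (pd α Fπ x) (pd β δf x) : ℝ) + (inner ℝ (pd β Fπ x) (pd α δf x) : ℝ)
              = δg α β x := by
  refine ⟨aux_card m hm, ?_⟩
  obtain ⟨δf, h1, h2⟩ := aux_main m hm δg hδg hδgsym
  refine ⟨δf, h1, fun α β x => ?_⟩
  have hF : ∀ α x, pd α Fπ x = dF α x := by
    intro α x
    rw [hFπ]
    exact aux_pd_F α x
  rw [hF, hF]
  exact h2 α β x
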